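/- Every subgraph of a Δ-tree admits a degenerate drawing with at most three distinct edge-lengths; that is, if G is a Δ-tree and G' is a subgraph of G, then there exists an injective map f from the vertex set of G' to ℂ such that the set of distances {|f(u) − f(w)| : uw an edge of G'} has cardinality at most 3. -/

import Mathlib

/-!
The drawing uses the edge-lengths `1`, `‖1 + t‖` and `‖1 + t ^ 2‖` for a generic `t` on the unit
circle. Vertices are first placed at polynomials in `ℂ[X]`, and `X` is then specialised to a `t`
on the circle avoiding the finitely many roots of the differences of positions.

Triangles are grouped into rhombi. Over a side from `P` to `P + m`, where `m = ± X ^ k`, the rhombus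
of step `d ∈ {1, 2}` is `P, P + m, P + m + m X ^ d, P + m X ^ d`; all its sides have length `1` and
its diagonal from `P` to `P + m + m X ^ d` has length `‖1 + t ^ d‖`. Further rhombi over the opposite
side keep the step `d`, so they form a strip. The two lateral sides of a rhombus start new strips,
whose step alternates between `2` and `1` from one rhombus of a strip to the next.

Injectivity is a decoding argument. After normalising `P = 0`, `m = 1`, every vertex generated
beyond a side has the form `ε + n X ^ d + X ^ d r` with `ε ∈ {0, 1}`, `n ∈ ℕ` and `r 0 = 0`. A vertex
of the strip has `r = 0`; otherwise the parity of the lowest exponent of `r` is the parity of the step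
of the lateral strip through which the vertex is reached, and it resolves the only ambiguity, namely
whether `n` counts the rhombi passed or exceeds that number by one. The set `region` records this
normal form. `Slot.step` shows that the region of an external edge contains the new vertex and the
regions of the two new external edges, all pairwise disjoint, and this is the invariant of the
induction along the construction of the Δ-tree (`exists_polynomial_drawing`).
-/

/-- A Δ-tree, presented as a vertex set `V`, an edge set `E` and a set `ext` of
currently-external edges.  It is built recursively: start with a triangle, all three
of whose edges are external; at each step pick an external edge `s(u,w)`, add a new
vertex `z` adjacent to exactly `u` and `w`, unmark `s(u,w)` and mark `s(u,z)` and
`s(z,w)` as external. -/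
inductive IsDeltaTreeAux : Finset ℕ → Finset (Sym2 ℕ) → Finset (Sym2 ℕ) → Prop
  | triangle (u v w : ℕ) (huv : u ≠ v) (huw : u ≠ w) (hvw : v ≠ w) :
      IsDeltaTreeAux {u, v, w} {s(u, v), s(u, w), s(v, w)} {s(u, v), s(u, w), s(v, w)}
  | extend (V : Finset ℕ) (E ext : Finset (Sym2 ℕ)) (u w z : ℕ)
      (h : IsDeltaTreeAux V E ext) (huw : s(u, w) ∈ ext) (hz : z ∉ V) :
      IsDeltaTreeAux (insert z V) (insert s(u, z) (insert s(z, w) E))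
        (insert s(u, z) (insert s(z, w) (ext.erase s(u, w))))

/-- A Δ-tree: a vertex set together with an edge set arising from the recursive
construction, for some set of external edges. -/
def IsDeltaTree (V : Finset ℕ) (E : Finset (Sym2 ℕ)) : Prop :=
  ∃ ext, IsDeltaTreeAux V E ext

/-- The length of the image of an (unordered) edge under a map `f : ℕ → ℂ`. -/
noncomputable def edgeLength (f : ℕ → ℂ) : Sym2 ℕ → ℝ :=
  Sym2.lift ⟨fun u w => dist (f u) (f w), fun u w => dist_comm (f u) (f w)⟩

open Polynomial

/-! ### Positions, regions and slots -/

/-- `r` is nonzero, vanishes at `0`, and its lowest exponent has the parity of `e`. -/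
def LowParity (e : ℕ) (r : ℂ[X]) : Prop :=
  ∃ j, 1 ≤ j ∧ j % 2 = e % 2 ∧ r.coeff j ≠ 0 ∧ ∀ i < j, r.coeff i = 0

/-- The normal form `ε + n X ^ d + X ^ d r`. -/
noncomputable def normalForm (d ε n : ℕ) (r : ℂ[X]) : ℂ[X] :=
  C (ε : ℂ) + C (n : ℂ) * X ^ d + X ^ d * r

/-- A set containing all vertices generated beyond the side from `0` to `1` by a strip of step `d`
whose first rhombus has lateral strips of step `e` (so that those of its second rhombus have step
`3 - e`). -/
def region (d e : ℕ) : Set ℂ[X] :=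
  {p | ∃ (ε n : ℕ) (r : ℂ[X]), ε ≤ 1 ∧ p = normalForm d ε n r ∧
    ((r = 0 ∧ 1 ≤ n) ∨ LowParity e r ∨ (1 ≤ n ∧ LowParity (3 - e) r))}

/-- The region beyond the side from `P` to `P + m`. -/
def sideRegion (P m : ℂ[X]) (d e : ℕ) : Set ℂ[X] :=
  {q | ∃ a ∈ region d e, q = P + m * a}

/-- The region beyond the diagonal from `P` to `P + m + m X ^ d`: the fourth corner of the rhombus
and the regions beyond its two sides at that corner. -/
def diagRegion (P m : ℂ[X]) (d e : ℕ) : Set ℂ[X] :=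
  {P + m * X ^ d} ∪ sideRegion P (m * X ^ d) e 2 ∪ sideRegion (P + m * X ^ d) m d (3 - e)

/-- `m` has modulus one on the unit circle. -/
def Unimodular (m : ℂ[X]) : Prop :=
  ∀ t : ℂ, ‖t‖ = 1 → ‖m.eval t‖ = 1

/-- The specialised distance of `a` and `b` is always one of the three lengths. -/
def GoodLength (a b : ℂ[X]) : Prop :=
  ∀ t : ℂ, ‖t‖ = 1 → dist (a.eval t) (b.eval t) ∈ ({1, ‖1 + t‖, ‖1 + t ^ 2‖} : Set ℝ)

/-- The external edge with ends `a` and `b` is a side or a diagonal of a rhombus, and `R` is the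
region reserved for the vertices generated beyond it. -/
def Slot (a b : ℂ[X]) (R : Set ℂ[X]) : Prop :=
  ∃ (P m : ℂ[X]) (d e : ℕ), Unimodular m ∧ (d = 1 ∨ d = 2) ∧ (e = 1 ∨ e = 2) ∧
    ((((a = P ∧ b = P + m) ∨ (a = P + m ∧ b = P)) ∧ R = sideRegion P m d e) ∨
     (((a = P ∧ b = P + m + m * X ^ d) ∨ (a = P + m + m * X ^ d ∧ b = P)) ∧
        R = diagRegion P m d e))

/-! ### Decoding normal forms -/

lemma LowParity.coeff_zero {e : ℕ} {r : ℂ[X]} (h : LowParity e r) : r.coeff 0 = 0 := by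
  obtain ⟨j, h1, -, -, h2⟩ := h
  exact h2 0 (by omega)

lemma LowParity.ne_zero {e : ℕ} {r : ℂ[X]} (h : LowParity e r) : r ≠ 0 := by
  obtain ⟨j, -, -, h1, -⟩ := h
  rintro rfl
  simp at h1

lemma LowParity.mod_eq {e e' : ℕ} {r : ℂ[X]} (h : LowParity e r) (h' : LowParity e' r) :
    e % 2 = e' % 2 := by
  obtain ⟨j, -, h1, h2, h3⟩ := h
  obtain ⟨j', -, h1', h2', h3'⟩ := h'
  have : j = j' := by
    rcases lt_trichotomy j j' with h | h | h
    · exact absurd (h3' _ h) h2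
    · exact h
    · exact absurd (h3 _ h) h2'
  omega

lemma LowParity.neg {e : ℕ} {r : ℂ[X]} (h : LowParity e r) : LowParity e (-r) := by
  obtain ⟨j, h1, h2, h3, h4⟩ := h
  exact ⟨j, h1, h2, by simpa using h3, fun i hi => by simpa using h4 i hi⟩

/-- A normal form determines its three ingredients. The coefficients range over `ℂ`, which
includes the negative ones that occur on the far side of the initial edge. -/
lemma normalForm_unique {d : ℕ} (hd : 1 ≤ d) {a n a' n' : ℂ} {r r' : ℂ[X]}
    (hr : r.coeff 0 = 0) (hr' : r'.coeff 0 = 0)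
    (h : C a + C n * X ^ d + X ^ d * r = C a' + C n' * X ^ d + X ^ d * r') :
    a = a' ∧ n = n' ∧ r = r' := by
  have h0 := congrArg (fun p => coeff p 0) h
  have hd' := congrArg (fun p => coeff p d) h
  have e0 : d ≠ 0 := by omega
  have e1 : ¬ d ≤ 0 := by omega
  simp [coeff_X_pow_mul', coeff_X_pow, coeff_C, e0, e0.symm, hr, hr'] at h0 hd'
  refine ⟨h0, hd', ?_⟩
  subst h0 hd'
  exact mul_left_cancel₀ (pow_ne_zero d X_ne_zero) (add_left_cancel h)

lemma normalForm_inj {d : ℕ} (hd : 1 ≤ d) {ε n ε' n' : ℕ} {r r' : ℂ[X]}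
    (hr : r.coeff 0 = 0) (hr' : r'.coeff 0 = 0)
    (h : normalForm d ε n r = normalForm d ε' n' r') :
    ε = ε' ∧ n = n' ∧ r = r' := by
  obtain ⟨h1, h2, h3⟩ := normalForm_unique hd hr hr' h
  exact ⟨by exact_mod_cast h1, by exact_mod_cast h2, h3⟩

/-- Beyond a lateral side of step `e`, whose first rhombus has lateral strips of even step, the step
`e` can be read off from the lowest exponent. -/
lemma lateral_form {e : ℕ} (he : e = 1 ∨ e = 2) {a : ℂ[X]} (ha : a ∈ region e 2) :
    ∃ (ε : ℕ) (r : ℂ[X]), ε ≤ 1 ∧ LowParity e r ∧ a = C (ε : ℂ) + r := by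
  obtain ⟨ε, n, r, hε, rfl, h⟩ := ha
  refine ⟨ε, C (n : ℂ) * X ^ e + X ^ e * r, hε, ?_, by simp [normalForm, add_assoc]⟩
  have key : 1 ≤ n → r.coeff 0 = 0 → LowParity e (C (n : ℂ) * X ^ e + X ^ e * r) := by
    intro hn hr
    refine ⟨e, by omega, rfl, ?_, fun i hi => ?_⟩
    · have : n ≠ 0 := by omega
      simp [coeff_X_pow_mul', hr, this]
    · have h1 : ¬ e ≤ i := by omega
      have h2 : i ≠ e := by omega
      simp [coeff_X_pow_mul', coeff_X_pow, h1, h2]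
  rcases h with ⟨rfl, hn⟩ | h | ⟨hn, h⟩
  · exact key hn (by simp)
  · rcases Nat.eq_zero_or_pos n with rfl | hn
    · obtain ⟨j, h1, h2, h3, h4⟩ := h
      refine ⟨j + e, by omega, by omega, ?_, fun i hi => ?_⟩
      · simpa [coeff_X_pow_mul'] using h3
      · by_cases hie : e ≤ i
        · simpa [coeff_X_pow_mul', hie] using h4 (i - e) (by omega)
        · simp [coeff_X_pow_mul', hie]
    · exact key hn h.coeff_zero
  · exact key hn h.coeff_zero

/-! ### Decomposition of a region along its first rhombus -/

/-- The five pieces of `region d e` cut out by the first rhombus: the two new corners, the two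
lateral regions, and the region beyond the opposite side. -/
inductive Piece (d e : ℕ) : Fin 5 → ℂ[X] → Prop
  | cornerR : Piece d e 0 (normalForm d 1 1 0)
  | cornerL : Piece d e 1 (normalForm d 0 1 0)
  | lateralR (ε : ℕ) (r : ℂ[X]) (hε : ε ≤ 1) (hr : LowParity e r) :
      Piece d e 2 (normalForm d 1 ε r)
  | lateralL (ε : ℕ) (r : ℂ[X]) (hε : ε ≤ 1) (hr : LowParity e r) :
      Piece d e 3 (normalForm d 0 ε r)
  | opposite (ε n : ℕ) (r : ℂ[X]) (hε : ε ≤ 1)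
      (h : (r = 0 ∧ 1 ≤ n) ∨ LowParity (3 - e) r ∨ (1 ≤ n ∧ LowParity e r)) :
      Piece d e 4 (normalForm d ε (n + 1) r)

/-- Every piece element in normal form, with the constraints that separate the pieces. -/
lemma Piece.spec {d e : ℕ} {i : Fin 5} {p : ℂ[X]} (h : Piece d e i p) :
    ∃ ε n r, p = normalForm d ε n r ∧ r.coeff 0 = 0 ∧ ε ≤ 1 ∧
      ((i = 0 ∧ ε = 1 ∧ n = 1 ∧ r = 0) ∨ (i = 1 ∧ ε = 0 ∧ n = 1 ∧ r = 0) ∨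
       (i = 2 ∧ ε = 1 ∧ n ≤ 1 ∧ LowParity e r) ∨ (i = 3 ∧ ε = 0 ∧ n ≤ 1 ∧ LowParity e r) ∨
       (i = 4 ∧ ((r = 0 ∧ 2 ≤ n) ∨ (1 ≤ n ∧ LowParity (3 - e) r) ∨ (2 ≤ n ∧ LowParity e r)))) := by
  cases h with
  | cornerR => exact ⟨1, 1, 0, rfl, by simp, by simp, by simp⟩
  | cornerL => exact ⟨0, 1, 0, rfl, by simp, by simp, by simp⟩
  | lateralR ε r hε hr => exact ⟨1, ε, r, rfl, hr.coeff_zero, le_rfl, by simp [hε, hr]⟩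
  | lateralL ε r hε hr => exact ⟨0, ε, r, rfl, hr.coeff_zero, by simp, by simp [hε, hr]⟩
  | opposite ε n r hε h =>
    refine ⟨ε, n + 1, r, rfl, ?_, hε, ?_⟩
    · rcases h with ⟨rfl, -⟩ | h | ⟨-, h⟩
      · simp
      · exact h.coeff_zero
      · exact h.coeff_zero
    · simpa using h

lemma Piece.disjoint {d e : ℕ} (hd : 1 ≤ d) (he : e = 1 ∨ e = 2) {i j : Fin 5} {p : ℂ[X]}
    (hi : Piece d e i p) (hj : Piece d e j p) : i = j := by
  obtain ⟨ε, n, r, rfl, hr, -, h⟩ := hi.spec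
  obtain ⟨ε', n', r', heq, hr', -, h'⟩ := hj.spec
  obtain ⟨rfl, rfl, rfl⟩ := normalForm_inj hd hr hr' heq
  have hz : ∀ e, LowParity e r → r ≠ 0 := fun e h => h.ne_zero
  have hx : ¬ (LowParity e r ∧ LowParity (3 - e) r) := by
    rintro ⟨h1, h2⟩
    have := h1.mod_eq h2
    omega
  have := hz e
  have := hz (3 - e)
  rcases h with h | h | h | h | h <;> rcases h' with h' | h' | h' | h' | h' <;> grind

lemma Piece.mem_region {d e : ℕ} {i : Fin 5} {p : ℂ[X]}
    (hi : Piece d e i p) : p ∈ region d e := by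
  obtain ⟨ε, n, r, rfl, hr, hε, h⟩ := hi.spec
  refine ⟨ε, n, r, hε, rfl, ?_⟩
  grind

lemma piece_lateralR {d e : ℕ} (he : e = 1 ∨ e = 2) {a : ℂ[X]} (ha : a ∈ region e 2) :
    Piece d e 2 (1 + X ^ d * a) := by
  obtain ⟨ε, r, hε, hr, rfl⟩ := lateral_form he ha
  convert Piece.lateralR (d := d) ε r hε hr using 1
  simp [normalForm]; ring

lemma piece_lateralL {d e : ℕ} (he : e = 1 ∨ e = 2) {a : ℂ[X]} (ha : a ∈ region e 2) :
    Piece d e 3 (X ^ d * a) := by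
  obtain ⟨ε, r, hε, hr, rfl⟩ := lateral_form he ha
  convert Piece.lateralL (d := d) ε r hε hr using 1
  simp [normalForm]; ring

lemma piece_opposite {d e : ℕ} (he : e = 1 ∨ e = 2) {a : ℂ[X]} (ha : a ∈ region d (3 - e)) :
    Piece d e 4 (X ^ d + a) := by
  obtain ⟨ε, n, r, hε, rfl, h⟩ := ha
  have : 3 - (3 - e) = e := by omega
  rw [this] at h
  convert Piece.opposite (d := d) ε n r hε h using 1
  simp [normalForm]; ring

/-- The piece `i` in the frame of the side from `P` to `P + m`. -/
def FramedPiece (P m : ℂ[X]) (d e : ℕ) (i : Fin 5) (q : ℂ[X]) : Prop :=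
  ∃ a, Piece d e i a ∧ q = P + m * a

lemma FramedPiece.disjoint {P m : ℂ[X]} {d e : ℕ} (hm : m ≠ 0) (hd : 1 ≤ d) (he : e = 1 ∨ e = 2)
    {i j : Fin 5} {q : ℂ[X]} (hi : FramedPiece P m d e i q) (hj : FramedPiece P m d e j q) :
    i = j := by
  obtain ⟨a, ha, rfl⟩ := hi
  obtain ⟨b, hb, h⟩ := hj
  have := mul_left_cancel₀ hm (add_left_cancel h)
  subst this
  exact ha.disjoint hd he hb

lemma FramedPiece.mem {P m : ℂ[X]} {d e : ℕ} {i : Fin 5} {q : ℂ[X]}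
    (hi : FramedPiece P m d e i q) : q ∈ sideRegion P m d e := by
  obtain ⟨a, ha, rfl⟩ := hi
  exact ⟨a, ha.mem_region, rfl⟩

lemma framed_cornerR (P m : ℂ[X]) (d e : ℕ) : FramedPiece P m d e 0 (P + m + m * X ^ d) :=
  ⟨_, .cornerR, by simp [normalForm]; ring⟩

lemma framed_cornerL (P m : ℂ[X]) (d e : ℕ) : FramedPiece P m d e 1 (P + m * X ^ d) :=
  ⟨_, .cornerL, by simp [normalForm]⟩

lemma framed_lateralR {P m : ℂ[X]} {d e : ℕ} (he : e = 1 ∨ e = 2) {q : ℂ[X]}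
    (hq : q ∈ sideRegion (P + m) (m * X ^ d) e 2) : FramedPiece P m d e 2 q := by
  obtain ⟨a, ha, rfl⟩ := hq
  exact ⟨_, piece_lateralR he ha, by ring⟩

lemma framed_lateralL {P m : ℂ[X]} {d e : ℕ} (he : e = 1 ∨ e = 2) {q : ℂ[X]}
    (hq : q ∈ sideRegion P (m * X ^ d) e 2) : FramedPiece P m d e 3 q := by
  obtain ⟨a, ha, rfl⟩ := hq
  exact ⟨_, piece_lateralL he ha, by ring⟩

lemma framed_opposite {P m : ℂ[X]} {d e : ℕ} (he : e = 1 ∨ e = 2) {q : ℂ[X]}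
    (hq : q ∈ sideRegion (P + m * X ^ d) m d (3 - e)) : FramedPiece P m d e 4 q := by
  obtain ⟨a, ha, rfl⟩ := hq
  exact ⟨_, piece_opposite he ha, by ring⟩

lemma framed_diag {P m : ℂ[X]} {d e : ℕ} (he : e = 1 ∨ e = 2) {q : ℂ[X]}
    (hq : q ∈ diagRegion P m d e) : ∃ i, (i = 1 ∨ i = 3 ∨ i = 4) ∧ FramedPiece P m d e i q := by
  rcases hq with (rfl | hq) | hq
  · exact ⟨1, by simp, framed_cornerL P m d e⟩
  · exact ⟨3, by simp, framed_lateralL he hq⟩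
  · exact ⟨4, by simp, framed_opposite he hq⟩

/-! ### Extending an external edge -/

lemma Unimodular.ne_zero {m : ℂ[X]} (hm : Unimodular m) : m ≠ 0 := by
  rintro rfl
  simpa using hm 1 (by simp)

lemma Unimodular.mul_X_pow {m : ℂ[X]} (hm : Unimodular m) (d : ℕ) : Unimodular (m * X ^ d) := by
  intro t ht
  simp [hm t ht, ht]

lemma GoodLength.symm {a b : ℂ[X]} (h : GoodLength a b) : GoodLength b a := by
  intro t ht
  rw [dist_comm]
  exact h t ht

lemma goodLength_side {P m : ℂ[X]} (hm : Unimodular m) : GoodLength P (P + m) := by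
  intro t ht
  left
  simp [hm t ht]

lemma goodLength_diag {P m : ℂ[X]} {d : ℕ} (hm : Unimodular m) (hd : d = 1 ∨ d = 2) :
    GoodLength P (P + m + m * X ^ d) := by
  intro t ht
  have : dist (P.eval t) ((P + m + m * X ^ d).eval t) = ‖1 + t ^ d‖ := by
    rw [dist_comm, dist_eq_norm]
    have : (P + m + m * X ^ d).eval t - P.eval t = m.eval t * (1 + t ^ d) := by
      simp; ring
    rw [this, norm_mul, hm t ht, one_mul]
  rw [this]
  rcases hd with rfl | rfl <;> simp

lemma Slot.symm {a b : ℂ[X]} {R : Set ℂ[X]} (h : Slot a b R) : Slot b a R := by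
  obtain ⟨P, m, d, e, hm, hd, he, h⟩ := h
  exact ⟨P, m, d, e, hm, hd, he, by tauto⟩

/-- Conclusion of `Slot.step`: a triangle with apex `c` can be erected over the edge from `a` to `b`,
with disjoint regions for the two new edges inside the region `R`. -/
def Extendable (a b : ℂ[X]) (R : Set ℂ[X]) : Prop :=
  ∃ c R₁ R₂, Slot a c R₁ ∧ Slot c b R₂ ∧ c ∈ R ∧ R₁ ⊆ R ∧ R₂ ⊆ R ∧ c ∉ R₁ ∧ c ∉ R₂ ∧
    Disjoint R₁ R₂ ∧ GoodLength a c ∧ GoodLength c b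

lemma Extendable.symm {a b : ℂ[X]} {R : Set ℂ[X]} (h : Extendable a b R) : Extendable b a R := by
  obtain ⟨c, R₁, R₂, h1, h2, h3, h4, h5, h6, h7, h8, h9, h10⟩ := h
  exact ⟨c, R₂, R₁, h2.symm, h1.symm, h3, h5, h4, h7, h6, h8.symm, h10.symm, h9.symm⟩

lemma extendable_side {P m : ℂ[X]} {d e : ℕ} (hm : Unimodular m) (hd : d = 1 ∨ d = 2)
    (he : e = 1 ∨ e = 2) : Extendable P (P + m) (sideRegion P m d e) := by
  have hd1 : 1 ≤ d := by omega
  have dj := fun {i j q} => FramedPiece.disjoint (P := P) (i := i) (j := j) (q := q) hm.ne_zero hd1 he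
  refine ⟨P + m + m * X ^ d, diagRegion P m d e, sideRegion (P + m) (m * X ^ d) e 2,
    ⟨P, m, d, e, hm, hd, he, Or.inr ⟨Or.inl ⟨rfl, rfl⟩, rfl⟩⟩,
    ⟨P + m, m * X ^ d, e, 2, hm.mul_X_pow d, he, Or.inr rfl, Or.inl ⟨Or.inr ⟨rfl, rfl⟩, rfl⟩⟩,
    (framed_cornerR P m d e).mem, ?_, fun q hq => (framed_lateralR he hq).mem, ?_, ?_, ?_,
    goodLength_diag hm hd, (goodLength_side (hm.mul_X_pow d)).symm⟩
  · intro q hq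
    obtain ⟨i, -, hi⟩ := framed_diag he hq
    exact hi.mem
  · intro hq
    obtain ⟨i, hi', hi⟩ := framed_diag he hq
    have := dj (framed_cornerR P m d e) hi
    omega
  · intro hq
    have := dj (framed_cornerR P m d e) (framed_lateralR he hq)
    omega
  · rw [Set.disjoint_left]
    intro q hq hq'
    obtain ⟨i, hi', hi⟩ := framed_diag he hq
    have := dj (framed_lateralR he hq') hi
    omega

lemma extendable_diag {P m : ℂ[X]} {d e : ℕ} (hm : Unimodular m) (hd : d = 1 ∨ d = 2)
    (he : e = 1 ∨ e = 2) : Extendable P (P + m + m * X ^ d) (diagRegion P m d e) := by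
  have hd1 : 1 ≤ d := by omega
  have dj := fun {i j q} => FramedPiece.disjoint (P := P) (i := i) (j := j) (q := q) hm.ne_zero hd1 he
  have comm : P + m + m * X ^ d = P + m * X ^ d + m := by ring
  refine ⟨P + m * X ^ d, sideRegion P (m * X ^ d) e 2, sideRegion (P + m * X ^ d) m d (3 - e),
    ⟨P, m * X ^ d, e, 2, hm.mul_X_pow d, he, Or.inr rfl, Or.inl ⟨Or.inl ⟨rfl, rfl⟩, rfl⟩⟩,
    ⟨P + m * X ^ d, m, d, 3 - e, hm, hd, by omega, Or.inl ⟨Or.inl ⟨rfl, comm⟩, rfl⟩⟩,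
    Or.inl (Or.inl rfl), fun q hq => Or.inl (Or.inr hq), fun q hq => Or.inr hq, ?_, ?_, ?_,
    goodLength_side (hm.mul_X_pow d), ?_⟩
  · intro hq
    have := dj (framed_cornerL P m d e) (framed_lateralL he hq)
    omega
  · intro hq
    have := dj (framed_cornerL P m d e) (framed_opposite he hq)
    omega
  · rw [Set.disjoint_left]
    intro q hq hq'
    have := dj (framed_lateralL he hq) (framed_opposite he hq')
    omega
  · rw [comm]
    exact goodLength_side hm

lemma Slot.step {a b : ℂ[X]} {R : Set ℂ[X]} (h : Slot a b R) : Extendable a b R := by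
  obtain ⟨P, m, d, e, hm, hd, he, h⟩ := h
  rcases h with ⟨⟨rfl, rfl⟩ | ⟨rfl, rfl⟩, rfl⟩ | ⟨⟨rfl, rfl⟩ | ⟨rfl, rfl⟩, rfl⟩
  · exact extendable_side hm hd he
  · exact (extendable_side hm hd he).symm
  · exact extendable_diag hm hd he
  · exact (extendable_diag hm hd he).symm

/-! ### The initial triangle -/

lemma const_notMem_region {d e k : ℕ} (hd : 1 ≤ d) : C (k : ℂ) ∉ region d e := by
  rintro ⟨ε, n, r, -, h, h'⟩
  have hr : r.coeff 0 = 0 := by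
    rcases h' with ⟨rfl, -⟩ | h | ⟨-, h⟩
    · simp
    · exact h.coeff_zero
    · exact h.coeff_zero
  have h0 : C (k : ℂ) = normalForm d k 0 0 := by simp [normalForm]
  obtain ⟨-, rfl, rfl⟩ := normalForm_inj hd (by simp) hr (h0.symm.trans h)
  rcases h' with ⟨-, h⟩ | h | ⟨-, h⟩
  · omega
  · exact h.ne_zero rfl
  · exact h.ne_zero rfl

/-- The regions on the two sides of the initial edge from `0` to `1` are disjoint. The second one is
obtained by a half-turn about the midpoint, so its coefficients of `X ^ 2` are `≤ 0`, and a common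
element would have that coefficient `0` and two different parities. -/
lemma root_disjoint : Disjoint (sideRegion 0 1 2 2) (sideRegion 1 (-1) 2 1) := by
  rw [Set.disjoint_left]
  rintro q ⟨a, ⟨ε, n, r, -, rfl, h⟩, rfl⟩ ⟨b, ⟨ε', n', r', -, rfl, h'⟩, heq⟩
  have hr : r.coeff 0 = 0 := by
    rcases h with ⟨rfl, -⟩ | h | ⟨-, h⟩
    · simp
    · exact h.coeff_zero
    · exact h.coeff_zero
  have hr' : r'.coeff 0 = 0 := by
    rcases h' with ⟨rfl, -⟩ | h | ⟨-, h⟩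
    · simp
    · exact h.coeff_zero
    · exact h.coeff_zero
  have heq' : C (ε : ℂ) + C (n : ℂ) * X ^ 2 + X ^ 2 * r
      = C (1 - ε' : ℂ) + C (-n' : ℂ) * X ^ 2 + X ^ 2 * (-r') := by
    simp only [normalForm] at heq
    simp only [C_sub, C_neg, C_1]
    linear_combination heq
  obtain ⟨-, hn, hrr⟩ := normalForm_unique (by norm_num) hr (by simp [hr']) heq'
  have hn' : ((n + n' : ℕ) : ℂ) = 0 := by push_cast; rw [hn]; ring
  have hn'' : n + n' = 0 := by exact_mod_cast hn'
  rcases h with ⟨-, h⟩ | h | ⟨h, -⟩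
  · omega
  · rcases h' with ⟨-, h'⟩ | h' | ⟨h', -⟩
    · omega
    · have := h'.neg
      rw [← hrr] at this
      have := this.mod_eq h
      omega
    · omega
  · omega

/-! ### The drawing -/

/-- A drawing in `ℂ[X]`, with a region `R e` reserved for each external edge `e`: these regions are
pairwise disjoint and contain no vertex drawn so far. -/
lemma exists_polynomial_drawing {V : Finset ℕ} {E ext : Finset (Sym2 ℕ)}
    (h : IsDeltaTreeAux V E ext) :
    ∃ (f : ℕ → ℂ[X]) (R : Sym2 ℕ → Set ℂ[X]), Set.InjOn f ↑V ∧
      (∀ u w, s(u, w) ∈ E → u ∈ V ∧ w ∈ V ∧ GoodLength (f u) (f w)) ∧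
      (∀ u w, s(u, w) ∈ ext → u ∈ V ∧ w ∈ V ∧ u ≠ w ∧ Slot (f u) (f w) (R s(u, w))) ∧
      (∀ e ∈ ext, ∀ v ∈ V, f v ∉ R e) ∧
      (∀ e ∈ ext, ∀ e' ∈ ext, e ≠ e' → Disjoint (R e) (R e')) := by
  induction h with
  | triangle u v w huv huw hvw =>
    have h1 : Unimodular 1 := fun t _ => by simp
    have hm1 : Unimodular (-1) := fun t _ => by simp
    have hslot : Slot 0 1 (sideRegion 0 1 2 2) :=
      ⟨0, 1, 2, 2, h1, by simp, by simp, Or.inl ⟨Or.inl (by simp), rfl⟩⟩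
    have hslot' : Slot 0 1 (sideRegion 1 (-1) 2 1) :=
      ⟨1, -1, 2, 1, hm1, by simp, by simp, Or.inl ⟨Or.inr (by simp), rfl⟩⟩
    have h01 : GoodLength 0 1 := by simpa using goodLength_side (P := 0) h1
    have c0 : ∀ e, (0 : ℂ[X]) ∉ region 2 e := fun e => by
      simpa using const_notMem_region (d := 2) (e := e) (k := 0) (by norm_num)
    have c1 : ∀ e, (1 : ℂ[X]) ∉ region 2 e := fun e => by
      simpa using const_notMem_region (d := 2) (e := e) (k := 1) (by norm_num)
    have n0 : (0 : ℂ[X]) ∉ sideRegion 0 1 2 2 := by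
      rintro ⟨a, ha, h⟩
      have : a = 0 := by linear_combination -h
      exact c0 2 (this ▸ ha)
    have n1 : (1 : ℂ[X]) ∉ sideRegion 0 1 2 2 := by
      rintro ⟨a, ha, h⟩
      have : a = 1 := by linear_combination -h
      exact c1 2 (this ▸ ha)
    have n0' : (0 : ℂ[X]) ∉ sideRegion 1 (-1) 2 1 := by
      rintro ⟨a, ha, h⟩
      have : a = 1 := by linear_combination h
      exact c1 1 (this ▸ ha)
    have n1' : (1 : ℂ[X]) ∉ sideRegion 1 (-1) 2 1 := by
      rintro ⟨a, ha, h⟩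
      have : a = 0 := by linear_combination h
      exact c0 1 (this ▸ ha)
    obtain ⟨c, R₁, R₂, s1, s2, hc, hR1, hR2, hc1, hc2, hdis, g1, g2⟩ := hslot.step
    have hc' := Set.disjoint_left.mp root_disjoint hc
    have d1 := root_disjoint.mono_left hR1
    have d2 := root_disjoint.mono_left hR2
    have hc0 : c ≠ 0 := fun h => n0 (h ▸ hc)
    have hc1' : c ≠ 1 := fun h => n1 (h ▸ hc)
    have m01 := fun h => n0 (hR1 h)
    have m02 := fun h => n0 (hR2 h)
    have m11 := fun h => n1 (hR1 h)
    have m12 := fun h => n1 (hR2 h)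
    have e1 : s(u, w) ≠ s(u, v) := by grind
    have e2 : s(v, w) ≠ s(u, v) := by grind
    have e3 : s(v, w) ≠ s(u, w) := by grind
    obtain ⟨f, fu, fv, fw⟩ : ∃ f : ℕ → ℂ[X], f u = 0 ∧ f v = 1 ∧ f w = c :=
      ⟨fun n => if n = u then 0 else if n = v then 1 else c, by grind, by grind, by grind⟩
    obtain ⟨R, Ruv, Ruw, Rvw⟩ : ∃ R : Sym2 ℕ → Set ℂ[X],
        R s(u, v) = sideRegion 1 (-1) 2 1 ∧ R s(u, w) = R₁ ∧ R s(v, w) = R₂ :=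
      ⟨fun e => if e = s(u, v) then sideRegion 1 (-1) 2 1 else if e = s(u, w) then R₁ else R₂,
        by simp, by simp [e1], by simp [e2, e3]⟩
    have z1 : (0 : ℂ[X]) ≠ 1 := zero_ne_one
    refine ⟨f, R, ?_, ?_, ?_, ?_, ?_⟩
    · intro a ha b hb hab
      simp only [Finset.coe_insert, Finset.coe_singleton, Set.mem_insert_iff,
        Set.mem_singleton_iff] at ha hb
      rcases ha with rfl | rfl | rfl <;> rcases hb with rfl | rfl | rfl <;> grind
    · intro a b hab
      simp only [Finset.mem_insert, Finset.mem_singleton, Sym2.eq_iff] at hab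
      rcases hab with (⟨rfl, rfl⟩ | ⟨rfl, rfl⟩) | (⟨rfl, rfl⟩ | ⟨rfl, rfl⟩) |
        (⟨rfl, rfl⟩ | ⟨rfl, rfl⟩) <;>
        simp [fu, fv, fw, h01, h01.symm, g1, g1.symm, g2, g2.symm]
    · intro a b hab
      simp only [Finset.mem_insert, Finset.mem_singleton, Sym2.eq_iff] at hab
      rcases hab with (⟨rfl, rfl⟩ | ⟨rfl, rfl⟩) | (⟨rfl, rfl⟩ | ⟨rfl, rfl⟩) |
        (⟨rfl, rfl⟩ | ⟨rfl, rfl⟩)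
      · simp [fu, fv, Ruv, huv, hslot']
      · simp [fu, fv, Sym2.eq_swap (a := a) (b := b), Ruv, huv.symm, hslot'.symm]
      · simp [fu, fw, Ruw, huw, s1]
      · simp [fu, fw, Sym2.eq_swap (a := a) (b := b), Ruw, huw.symm, s1.symm]
      · simp [fv, fw, Rvw, hvw, s2.symm]
      · simp [fv, fw, Sym2.eq_swap (a := a) (b := b), Rvw, hvw.symm, s2]
    · intro e he x hx
      simp only [Finset.mem_insert, Finset.mem_singleton] at he hx
      rcases he with rfl | rfl | rfl <;> rcases hx with rfl | rfl | rfl <;>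
        simp only [fu, fv, fw, Ruv, Ruw, Rvw] <;> assumption
    · intro e he e' he' hne
      simp only [Finset.mem_insert, Finset.mem_singleton] at he he'
      rcases he with rfl | rfl | rfl <;> rcases he' with rfl | rfl | rfl <;>
        first
        | exact absurd rfl hne
        | (simp only [Ruv, Ruw, Rvw]; first | assumption | (apply Disjoint.symm; assumption))
  | extend V E ext u w z h huw hz ih =>
    obtain ⟨f, R, hinj, hE, hext, hfree, hdisj⟩ := ih
    obtain ⟨huV, hwV, hne, hslot⟩ := hext u w huw
    obtain ⟨c, R₁, R₂, s1, s2, hc, hR1, hR2, hc1, hc2, hdis, g1, g2⟩ := hslot.step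
    have hold : ∀ v ∈ V, v ≠ z := fun v hv h => hz (h ▸ hv)
    have e12 : s(z, w) ≠ s(u, z) := by grind
    have hnew : ∀ e ∈ ext, e ≠ s(u, z) ∧ e ≠ s(z, w) := by
      intro e he
      refine ⟨?_, ?_⟩ <;> rintro rfl
      · exact hz (hext _ _ he).2.1
      · exact hz (hext _ _ he).1
    obtain ⟨f', fz, fo⟩ : ∃ f' : ℕ → ℂ[X], f' z = c ∧ ∀ v ∈ V, f' v = f v :=
      ⟨fun n => if n = z then c else f n, by simp, fun v hv => by simp [hold v hv]⟩
    obtain ⟨R', Ruz, Rzw, Ro⟩ : ∃ R' : Sym2 ℕ → Set ℂ[X],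
        R' s(u, z) = R₁ ∧ R' s(z, w) = R₂ ∧ ∀ e ∈ ext, R' e = R e :=
      ⟨fun e => if e = s(u, z) then R₁ else if e = s(z, w) then R₂ else R e,
        by simp, by simp [e12], fun e he => by simp [hnew e he]⟩
    have hcV : ∀ v ∈ V, f v ≠ c := fun v hv h => hfree _ huw v hv (h ▸ hc)
    have hcE : ∀ e ∈ ext, e ≠ s(u, w) → c ∉ R e := fun e he hne' hce =>
      Set.disjoint_left.mp (hdisj e he _ huw hne') hce hc
    refine ⟨f', R', ?_, ?_, ?_, ?_, ?_⟩
    · intro a ha b hb hab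
      simp only [Finset.coe_insert, Set.mem_insert_iff, Finset.mem_coe] at ha hb
      rcases ha with rfl | ha <;> rcases hb with rfl | hb
      · rfl
      · rw [fz, fo b hb] at hab
        exact absurd hab.symm (hcV b hb)
      · rw [fz, fo a ha] at hab
        exact absurd hab (hcV a ha)
      · rw [fo a ha, fo b hb] at hab
        exact hinj ha hb hab
    · intro a b hab
      simp only [Finset.mem_insert, Sym2.eq_iff] at hab
      rcases hab with (⟨rfl, rfl⟩ | ⟨rfl, rfl⟩) | (⟨rfl, rfl⟩ | ⟨rfl, rfl⟩) | hab
      · simp [fz, fo _ huV, huV, g1]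
      · simp [fz, fo _ huV, huV, g1.symm]
      · simp [fz, fo _ hwV, hwV, g2]
      · simp [fz, fo _ hwV, hwV, g2.symm]
      · obtain ⟨ha, hb, hg⟩ := hE a b hab
        simp [ha, hb, fo a ha, fo b hb, hg]
    · intro a b hab
      simp only [Finset.mem_insert, Finset.mem_erase, Sym2.eq_iff] at hab
      rcases hab with (⟨rfl, rfl⟩ | ⟨rfl, rfl⟩) | (⟨rfl, rfl⟩ | ⟨rfl, rfl⟩) | hab
      · simp [fz, fo _ huV, huV, s1, Ruz, hold _ huV]
      · simp [fz, fo _ huV, huV, s1.symm, Sym2.eq_swap (a := a) (b := b), Ruz, (hold _ huV).symm]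
      · simp [fz, fo _ hwV, hwV, s2, Rzw, (hold _ hwV).symm]
      · simp [fz, fo _ hwV, hwV, s2.symm, Sym2.eq_swap (a := a) (b := b), Rzw, hold _ hwV]
      · obtain ⟨ha, hb, hab', hs⟩ := hext a b hab.2
        simp [ha, hb, hab', fo a ha, fo b hb, Ro _ hab.2, hs]
    · intro e he x hx
      simp only [Finset.mem_insert, Finset.mem_erase] at he hx
      rcases he with rfl | rfl | ⟨hee, he⟩ <;> rcases hx with rfl | hx
      · rwa [fz, Ruz]
      · rw [fo x hx, Ruz]
        exact fun h => hfree _ huw x hx (hR1 h)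
      · rwa [fz, Rzw]
      · rw [fo x hx, Rzw]
        exact fun h => hfree _ huw x hx (hR2 h)
      · rw [fz, Ro e he]
        exact hcE e he hee
      · rw [fo x hx, Ro e he]
        exact hfree e he x hx
    · intro e he e' he' hne'
      simp only [Finset.mem_insert, Finset.mem_erase] at he he'
      rcases he with rfl | rfl | ⟨hee, he⟩ <;> rcases he' with rfl | rfl | ⟨hee', he'⟩
      · exact absurd rfl hne'
      · rwa [Ruz, Rzw]
      · rw [Ruz, Ro e' he']
        exact (hdisj _ huw e' he' hee'.symm).mono_left hR1
      · rw [Ruz, Rzw]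
        exact hdis.symm
      · exact absurd rfl hne'
      · rw [Rzw, Ro e' he']
        exact (hdisj _ huw e' he' hee'.symm).mono_left hR2
      · rw [Ruz, Ro e he]
        exact (hdisj e he _ huw hee).mono_right hR1
      · rw [Rzw, Ro e he]
        exact (hdisj e he _ huw hee).mono_right hR2
      · rw [Ro e he, Ro e' he']
        exact hdisj e he e' he' ‹_›

/-- Every subgraph of a Δ-tree admits a degenerate drawing (an injective map of its
vertices into ℂ) with at most three distinct edge-lengths. -/
theorem subgraph_of_deltaTree_degenerate_drawing_three_lengths
    (V : Finset ℕ) (E : Finset (Sym2 ℕ)) (hG : IsDeltaTree V E)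
    (V' : Finset ℕ) (E' : Finset (Sym2 ℕ)) (hV' : V' ⊆ V) (hE' : E' ⊆ E)
    (hinc : ∀ e ∈ E', ∀ v ∈ e, v ∈ V') :
    ∃ f : ℕ → ℂ, Set.InjOn f ↑V' ∧ (E'.image (edgeLength f)).card ≤ 3 := by
  obtain ⟨ext, h⟩ := hG
  obtain ⟨f, -, hinj, hE, -⟩ := exists_polynomial_drawing h
  -- The roots of `F` are the parameters for which two vertices collide.
  let F : ℂ[X] := ∏ p ∈ V.offDiag, (f p.1 - f p.2)
  have hF : F ≠ 0 := by
    refine Finset.prod_ne_zero_iff.mpr fun p hp => sub_ne_zero.mpr fun hfp => ?_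
    rw [Finset.mem_offDiag] at hp
    exact hp.2.2 (hinj hp.1 hp.2.1 hfp)
  have hcirc : (Metric.sphere (0 : ℂ) 1).Infinite :=
    (isPreconnected_sphere (by simp [Complex.rank_real_complex]) 0 1).infinite_of_nontrivial
      ⟨1, by simp, -1, by simp, by norm_num⟩
  obtain ⟨t, ht, htF⟩ : ∃ t : ℂ, ‖t‖ = 1 ∧ F.eval t ≠ 0 := by
    by_contra! hcon
    exact hF (Polynomial.eq_zero_of_infinite_isRoot F
      (hcirc.mono fun t ht => hcon t (by simpa using ht)))
  refine ⟨fun n => (f n).eval t, ?_, ?_⟩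
  · intro u hu v hv huv
    by_contra hne
    apply htF
    simp only [F, eval_prod]
    refine Finset.prod_eq_zero (i := (u, v)) ?_ ?_
    · exact Finset.mem_offDiag.mpr ⟨hV' hu, hV' hv, hne⟩
    · simpa [sub_eq_zero] using huv
  · refine (Finset.card_le_card (t := {1, ‖1 + t‖, ‖1 + t ^ 2‖}) ?_).trans Finset.card_le_three
    intro x hx
    obtain ⟨e, he, rfl⟩ := Finset.mem_image.mp hx
    induction e with
    | _ u w =>
      have := (hE u w (hE' he)).2.2 t ht
      simpa [edgeLength] using this
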